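/- arXiv:1512.08609 — 2 statements merged into one kernel-verified Lean document; each statement's English description precedes it below -/
import Mathlib

section
/- Under the stability condition ρ(1 + β₁γ_{1,1}) < 1, the probability that an arriving inbound call enters the orbit satisfies P_w = lim_{z→1⁻} (P̃₁(z) + P̃₂(z) + P̃₃(z) + P̃₄(z)) = [ρ(1 + β₁γ_{1,1}) + σ(1 + β₂γ_{2,1})] / (1 + σ(1 + β₂γ_{2,1})), where ρ = λμ_{1,1} and σ = αμ_{2,1}. -/
open MeasureTheory

/-- Laplace transform of a (Borel) measure on `ℝ`. -/
noncomputable def lapl (μ : Measure ℝ) (θ : ℝ) : ℝ :=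
  ∫ x, Real.exp (-θ * x) ∂μ

lemma lapl_aux (μ : Measure ℝ) [IsProbabilityMeasure μ] (h0 : μ (Set.Iio 0) = 0)
    (hi : Integrable (fun x => x) μ) :
    Filter.Tendsto (fun θ : ℝ => (1 - lapl μ θ) / θ) (nhdsWithin 0 (Set.Ioi 0))
      (nhds (∫ x, x ∂μ)) := by
  have hnn : ∀ᵐ x ∂μ, (0:ℝ) ≤ x := by
    rw [ae_iff]
    convert h0 using 2
    ext x; simp
  have key : Filter.Tendsto (fun θ : ℝ => ∫ x, (1 - Real.exp (-θ * x)) / θ ∂μ)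
      (nhdsWithin 0 (Set.Ioi 0)) (nhds (∫ x, x ∂μ)) := by
    apply tendsto_integral_filter_of_dominated_convergence (fun x => x)
    · filter_upwards with θ
      exact Measurable.aestronglyMeasurable (by fun_prop)
    · filter_upwards [self_mem_nhdsWithin] with θ hθ
      have hθ' : (0:ℝ) < θ := hθ
      filter_upwards [hnn] with x hx
      have e1 : Real.exp (-θ * x) ≤ 1 := by
        rw [Real.exp_le_one_iff]; nlinarith [mul_nonneg hθ'.le hx]
      have e2 := Real.add_one_le_exp (-θ * x)
      rw [Real.norm_eq_abs, abs_of_nonneg (div_nonneg (by linarith) hθ'.le), div_le_iff₀ hθ']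
      nlinarith
    · exact hi
    · filter_upwards with x
      have hd : HasDerivAt (fun θ : ℝ => 1 - Real.exp (-θ * x)) x 0 := by
        have := ((((hasDerivAt_id (0:ℝ)).neg).mul_const x).exp).const_sub 1
        simpa using this
      have := hd.tendsto_slope
      have h2 := this.mono_left (nhdsWithin_mono (0:ℝ) (fun y (hy : 0 < y) => ne_of_gt hy))
      refine h2.congr' ?_
      filter_upwards with θ
      simp [slope_def_field]
  refine key.congr' ?_
  filter_upwards [self_mem_nhdsWithin] with θ hθ
  have hθ' : (0:ℝ) < θ := hθ
  rw [integral_div, integral_sub (integrable_const 1)]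
  · simp [lapl]
  · refine Integrable.mono' (integrable_const (1:ℝ)) (Measurable.aestronglyMeasurable (by fun_prop)) ?_
    filter_upwards [hnn] with x hx
    rw [Real.norm_eq_abs, abs_of_pos (Real.exp_pos _), Real.exp_le_one_iff]
    nlinarith [mul_nonneg hθ'.le hx]

lemma lapl_le_one (μ : Measure ℝ) [IsProbabilityMeasure μ] (h0 : μ (Set.Iio 0) = 0)
    (θ : ℝ) (hθ : 0 ≤ θ) : lapl μ θ ≤ 1 := by
  have hnn : ∀ᵐ x ∂μ, (0:ℝ) ≤ x := by
    rw [ae_iff]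
    convert h0 using 2
    ext x; simp
  have : ∫ x, Real.exp (-θ * x) ∂μ ≤ ∫ x, (1:ℝ) ∂μ := by
    apply integral_mono_of_nonneg
    · filter_upwards with x using (Real.exp_pos _).le
    · exact integrable_const _
    · filter_upwards [hnn] with x hx
      rw [Real.exp_le_one_iff]
      nlinarith [mul_nonneg hθ hx]
  simpa [lapl] using this

lemma lapl_zero_eq (μ : Measure ℝ) [IsProbabilityMeasure μ] : lapl μ 0 = 1 := by
  simp [lapl]

lemma mean_nonneg (μ : Measure ℝ) (h0 : μ (Set.Iio 0) = 0) : 0 ≤ ∫ x, x ∂μ := by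
  apply integral_nonneg_of_ae
  rw [Filter.EventuallyLE, ae_iff]
  convert h0 using 2
  ext x; simp

lemma block_aux (lam beta : ℝ) (hlam : 0 < lam) (hbeta : 0 ≤ beta)
    (S R : Measure ℝ) [IsProbabilityMeasure S] [IsProbabilityMeasure R]
    (hS : S (Set.Iio 0) = 0) (hR : R (Set.Iio 0) = 0)
    (hiS : Integrable (fun x => x) S) (hiR : Integrable (fun x => x) R)
    (h δ : ℝ → ℝ)
    (hh : ∀ z, h z = lam + beta - lam * z - beta * lapl R (lam - lam * z))
    (hδ : ∀ z, δ z = lapl S (h z)) :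
    (∀ z < 1, 0 < h z) ∧
    Filter.Tendsto (fun z => (1 - lapl R (lam - lam * z)) / (lam - lam * z))
      (nhdsWithin 1 (Set.Iio 1)) (nhds (∫ x, x ∂ R)) ∧
    Filter.Tendsto (fun z => (1 - δ z) / h z)
      (nhdsWithin 1 (Set.Iio 1)) (nhds (∫ x, x ∂S)) ∧
    Filter.Tendsto (fun z => (1 - δ z) / (1 - z))
      (nhdsWithin 1 (Set.Iio 1)) (nhds ((∫ x, x ∂S) * (lam * (1 + beta * ∫ x, x ∂ R)))) := by
  have hpos : ∀ z < 1, 0 < h z := by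
    intro z hz
    have hw : 0 < lam - lam * z := by nlinarith
    have := lapl_le_one R hR _ hw.le
    rw [hh]
    nlinarith
  have hw : Filter.Tendsto (fun z : ℝ => lam - lam * z) (nhdsWithin 1 (Set.Iio 1))
      (nhdsWithin 0 (Set.Ioi 0)) := by
    apply tendsto_nhdsWithin_of_tendsto_nhds_of_eventually_within
    · have : ContinuousAt (fun z : ℝ => lam - lam * z) 1 := by fun_prop
      have h3 := this.tendsto
      simp only [mul_one, sub_self] at h3
      exact h3.mono_left nhdsWithin_le_nhds
    · filter_upwards [self_mem_nhdsWithin] with z hz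
      have : z < 1 := hz
      show 0 < lam - lam * z
      nlinarith
  have t1 := (lapl_aux R hR hiR).comp hw
  have t2 : Filter.Tendsto (fun z => h z / (1 - z)) (nhdsWithin 1 (Set.Iio 1))
      (nhds (lam * (1 + beta * ∫ x, x ∂ R))) := by
    refine (((t1.const_mul beta).const_add 1).const_mul lam).congr' ?_
    filter_upwards [self_mem_nhdsWithin] with z hz
    have hz' : z < 1 := hz
    have e1 : (1 - z) ≠ 0 := by linarith
    simp only [Function.comp, hh]
    rw [show lam - lam * z = lam * (1 - z) by ring]
    field_simp
    ring
  have tz : Filter.Tendsto (fun z : ℝ => 1 - z) (nhdsWithin 1 (Set.Iio 1)) (nhds 0) := by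
    have : ContinuousAt (fun z : ℝ => 1 - z) 1 := by fun_prop
    have h3 := this.tendsto
    simp only [sub_self] at h3
    exact h3.mono_left nhdsWithin_le_nhds
  have t3 : Filter.Tendsto h (nhdsWithin 1 (Set.Iio 1)) (nhdsWithin 0 (Set.Ioi 0)) := by
    apply tendsto_nhdsWithin_of_tendsto_nhds_of_eventually_within
    · have := t2.mul tz
      rw [mul_zero] at this
      refine this.congr' ?_
      filter_upwards [self_mem_nhdsWithin] with z hz
      have hz' : z < 1 := hz
      have e1 : (1 - z) ≠ 0 := by linarith
      field_simp
    · filter_upwards [self_mem_nhdsWithin] with z hz using hpos z hz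
  have t4 : Filter.Tendsto (fun z => (1 - δ z) / h z)
      (nhdsWithin 1 (Set.Iio 1)) (nhds (∫ x, x ∂S)) := by
    refine ((lapl_aux S hS hiS).comp t3).congr' ?_
    filter_upwards with z
    simp [hδ]
  refine ⟨hpos, t1, t4, ?_⟩
  refine (t4.mul t2).congr' ?_
  filter_upwards [self_mem_nhdsWithin] with z hz
  have hz' : z < 1 := hz
  have e1 : (1 - z) ≠ 0 := by linarith
  have e2 := (hpos z hz').ne'
  field_simp

/-- probability that an arriving inbound call enters the orbit
`P_w = lim_{z→1⁻} (P̃₁(z) + P̃₂(z) + P̃₃(z) + P̃₄(z))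
     = [ρ(1 + β₁γ_{1,1}) + σ(1 + β₂γ_{2,1})] / (1 + σ(1 + β₂γ_{2,1}))`. -/
theorem orbit_entry_probability
    (lam alpha nu beta1 beta2 : ℝ)
    (hlam : 0 < lam) (halpha : 0 < alpha) (hnu : 0 < nu)
    (hbeta1 : 0 ≤ beta1) (hbeta2 : 0 ≤ beta2)
    (S1 R1 S2 R2 : Measure ℝ)
    [IsProbabilityMeasure S1] [IsProbabilityMeasure R1]
    [IsProbabilityMeasure S2] [IsProbabilityMeasure R2]
    (hS1 : S1 (Set.Iio 0) = 0) (hR1 : R1 (Set.Iio 0) = 0)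
    (hS2 : S2 (Set.Iio 0) = 0) (hR2 : R2 (Set.Iio 0) = 0)
    (hiS1 : Integrable (fun x => x) S1) (hiR1 : Integrable (fun x => x) R1)
    (hiS2 : Integrable (fun x => x) S2) (hiR2 : Integrable (fun x => x) R2)
    (mu11 gamma11 mu21 gamma21 : ℝ)
    (hmu11 : mu11 = ∫ x, x ∂S1) (hgamma11 : gamma11 = ∫ x, x ∂ R1)
    (hmu21 : mu21 = ∫ x, x ∂S2) (hgamma21 : gamma21 = ∫ x, x ∂ R2)
    (rho sigma : ℝ) (hrho : rho = lam * mu11) (hsigma : sigma = alpha * mu21)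
    (h1 h2 δ1 δ2 g φ : ℝ → ℝ)
    (hh1 : ∀ z, h1 z = lam + beta1 - lam * z - beta1 * lapl R1 (lam - lam * z))
    (hh2 : ∀ z, h2 z = lam + beta2 - lam * z - beta2 * lapl R2 (lam - lam * z))
    (hδ1 : ∀ z, δ1 z = lapl S1 (h1 z)) (hδ2 : ∀ z, δ2 z = lapl S2 (h2 z))
    (hg : ∀ u, g u = (lam * (1 - δ1 u) + alpha * (1 - δ2 u)) / (nu * (δ1 u - u)))
    (hφ : ∀ z, φ z = Real.exp (-(∫ u in z..1, g u)))
    (P0 : ℝ → ℝ)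
    (hP0 : ∀ z, P0 z = ((1 - rho * (1 + beta1 * gamma11)) /
      (1 + sigma * (1 + beta2 * gamma21))) * φ z)
    (P1 P2 : ℝ → ℝ)
    (hP1 : ∀ z, P1 z = (lam * (1 - z) + alpha * (1 - δ2 z)) * (1 - δ1 z) /
      ((δ1 z - z) * h1 z) * P0 z)
    (hP2 : ∀ z, P2 z = alpha * (1 - δ2 z) / h2 z * P0 z)
    (P3 P4 : ℝ → ℝ)
    (hP3 : ∀ z, P3 z = beta1 * (1 - lapl R1 (lam - lam * z)) / (lam - lam * z) * P1 z)
    (hP4 : ∀ z, P4 z = beta2 * (1 - lapl R2 (lam - lam * z)) / (lam - lam * z) * P2 z)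
    (hstab : rho * (1 + beta1 * gamma11) < 1) :
    Filter.Tendsto (fun z : ℝ => P1 z + P2 z + P3 z + P4 z) (nhdsWithin 1 (Set.Iio 1))
      (nhds ((rho * (1 + beta1 * gamma11) + sigma * (1 + beta2 * gamma21)) /
        (1 + sigma * (1 + beta2 * gamma21)))) := by
  obtain ⟨p1, a1, b1, c1⟩ := block_aux lam beta1 hlam hbeta1 S1 R1 hS1 hR1 hiS1 hiR1 h1 δ1 hh1 hδ1
  obtain ⟨p2, a2, b2, c2⟩ := block_aux lam beta2 hlam hbeta2 S2 R2 hS2 hR2 hiS2 hiR2 h2 δ2 hh2 hδ2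
  have m2 := mean_nonneg S2 hS2
  have n2 := mean_nonneg R2 hR2
  rw [← hmu11, ← hgamma11] at *
  rw [← hmu21, ← hgamma21] at *
  set B1 := 1 + beta1 * gamma11 with hB1
  set B2 := 1 + beta2 * gamma21 with hB2
  have hB2' : 0 ≤ B2 := by positivity
  have hsig : 0 ≤ sigma := by rw [hsigma]; positivity
  have hD : 0 < 1 + sigma * B2 := by positivity
  have hst : 0 < 1 - rho * B1 := by linarith
  -- denominator
  have td : Filter.Tendsto (fun z => (δ1 z - z) / (1 - z)) (nhdsWithin 1 (Set.Iio 1))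
      (nhds (1 - rho * B1)) := by
    have e : 1 - rho * B1 = 1 - mu11 * (lam * B1) := by rw [hrho]; ring
    rw [e]
    refine (c1.const_sub 1).congr' ?_
    filter_upwards [self_mem_nhdsWithin] with z hz
    have hz' : z < 1 := hz
    have e1 : (1 - z) ≠ 0 := by linarith
    field_simp
    ring
  have hne : ∀ᶠ z in nhdsWithin 1 (Set.Iio 1), 0 < (δ1 z - z) / (1 - z) :=
    td.eventually (lt_mem_nhds hst)
  -- g converges
  have tg : Filter.Tendsto g (nhdsWithin 1 (Set.Iio 1))
      (nhds ((lam * (mu11 * (lam * B1)) + alpha * (mu21 * (lam * B2))) / (nu * (1 - rho * B1)))) := by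
    refine (((c1.const_mul lam).add (c2.const_mul alpha)).div (td.const_mul nu)
      (by positivity)).congr' ?_
    filter_upwards [self_mem_nhdsWithin, hne] with z hz hz2
    have hz' : z < 1 := hz
    have e1 : (1 - z) ≠ 0 := by linarith
    have e2 : δ1 z - z ≠ 0 := by
      intro h; rw [h] at hz2; simp at hz2
    simp only [Pi.div_apply]
    rw [hg]
    field_simp
  have g1 : g 1 = 0 := by
    have e1 : h1 1 = 0 := by rw [hh1]; simp [lapl_zero_eq]
    have e2 : δ1 1 = 1 := by rw [hδ1, e1, lapl_zero_eq]
    rw [hg, e2]; simp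
  have tI : Filter.Tendsto (fun z => ∫ u in z..1, g u) (nhdsWithin 1 (Set.Iio 1)) (nhds 0) := by
    set L := (lam * (mu11 * (lam * B1)) + alpha * (mu21 * (lam * B2))) / (nu * (1 - rho * B1))
    have hb : ∀ᶠ z in nhdsWithin 1 (Set.Iio 1), ‖g z‖ < ‖L‖ + 1 :=
      tg.norm.eventually (gt_mem_nhds (by linarith))
    obtain ⟨l, hl, hsub⟩ := (mem_nhdsLT_iff_exists_Ioo_subset).1 hb
    have hl' : l < 1 := hl
    have tz : Filter.Tendsto (fun z : ℝ => (‖L‖ + 1) * |1 - z|) (nhdsWithin 1 (Set.Iio 1))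
        (nhds 0) := by
      have : ContinuousAt (fun z : ℝ => (‖L‖ + 1) * |1 - z|) 1 := by fun_prop
      have h3 := this.tendsto
      simp only [sub_self, abs_zero, mul_zero] at h3
      exact h3.mono_left nhdsWithin_le_nhds
    refine squeeze_zero_norm' ?_ tz
    filter_upwards [Ioo_mem_nhdsLT hl'] with z hz
    apply intervalIntegral.norm_integral_le_of_norm_le_const
    intro u hu
    rw [Set.uIoc_of_le hz.2.le] at hu
    rcases eq_or_lt_of_le hu.2 with h | h
    · rw [h, g1, norm_zero]; positivity
    · exact (hsub ⟨hz.1.trans hu.1, h⟩ : ‖g u‖ < ‖L‖ + 1).le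
  have tφ : Filter.Tendsto φ (nhdsWithin 1 (Set.Iio 1)) (nhds 1) := by
    have := (Real.continuous_exp.tendsto _).comp tI.neg
    simp only [neg_zero, Real.exp_zero] at this
    exact this.congr (fun z => (hφ z).symm)
  have tP0 : Filter.Tendsto P0 (nhdsWithin 1 (Set.Iio 1))
      (nhds ((1 - rho * B1) / (1 + sigma * B2))) := by
    have := tφ.const_mul ((1 - rho * B1) / (1 + sigma * B2))
    rw [mul_one] at this
    exact this.congr (fun z => (hP0 z).symm)
  have tP1 : Filter.Tendsto P1 (nhdsWithin 1 (Set.Iio 1)) (nhds rho) := by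
    have e : rho = (lam + alpha * (mu21 * (lam * B2))) * mu11 / (1 - rho * B1) *
        ((1 - rho * B1) / (1 + sigma * B2)) := by
      have e0 : (lam + alpha * (mu21 * (lam * B2))) * mu11 = rho * (1 + sigma * B2) := by
        rw [hrho, hsigma]; ring
      rw [e0]
      field_simp
    rw [e]
    refine ((((((c2.const_mul alpha).const_add lam).mul b1).div td hst.ne').mul tP0)).congr' ?_
    filter_upwards [self_mem_nhdsWithin, hne] with z hz hz2
    have hz' : z < 1 := hz
    have e1 : (1 - z) ≠ 0 := by linarith
    have e2 : δ1 z - z ≠ 0 := by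
      intro h; rw [h] at hz2; simp at hz2
    have e3 := (p1 z hz').ne'
    simp only [Pi.div_apply]
    rw [hP1]
    field_simp
  have tP2 : Filter.Tendsto P2 (nhdsWithin 1 (Set.Iio 1))
      (nhds (alpha * mu21 * ((1 - rho * B1) / (1 + sigma * B2)))) := by
    refine ((b2.const_mul alpha).mul tP0).congr (fun z => ?_)
    rw [hP2]; ring
  have tP3 : Filter.Tendsto P3 (nhdsWithin 1 (Set.Iio 1)) (nhds (beta1 * gamma11 * rho)) := by
    refine ((a1.const_mul beta1).mul tP1).congr (fun z => ?_)
    rw [hP3]; ring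
  have tP4 : Filter.Tendsto P4 (nhdsWithin 1 (Set.Iio 1))
      (nhds (beta2 * gamma21 * (alpha * mu21 * ((1 - rho * B1) / (1 + sigma * B2))))) := by
    refine ((a2.const_mul beta2).mul tP2).congr (fun z => ?_)
    rw [hP4]; ring
  have hfin := ((tP1.add tP2).add tP3).add tP4
  have e : (rho * B1 + sigma * B2) / (1 + sigma * B2) =
      rho + alpha * mu21 * ((1 - rho * B1) / (1 + sigma * B2)) + beta1 * gamma11 * rho +
      beta2 * gamma21 * (alpha * mu21 * ((1 - rho * B1) / (1 + sigma * B2))) := by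
    rw [← hsigma]
    have : rho + sigma * ((1 - rho * B1) / (1 + sigma * B2)) + beta1 * gamma11 * rho +
      beta2 * gamma21 * (sigma * ((1 - rho * B1) / (1 + sigma * B2))) =
      rho * B1 + sigma * B2 * ((1 - rho * B1) / (1 + sigma * B2)) := by
      rw [hB1, hB2]; ring
    rw [this]
    field_simp
    ring
  rw [e]
  exact hfin
end

section
/- Under the stability condition ρ(1 + β₁γ_{1,1}) < 1, the orbit-size generating function P(z) = P₀(z) + P̃₁(z) + P̃₂(z) + P̃₃(z) + P̃₄(z) satisfies lim_{z→1⁻} P(z) = 1 (normalization of the stationary distribution), where ρ = λμ_{1,1}. -/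
open MeasureTheory

open Filter Topology in
theorem lapl_slope (μ : Measure ℝ) [IsProbabilityMeasure μ] (h0 : μ (Set.Iio 0) = 0)
    (hi : Integrable (fun x => x) μ) :
    Tendsto (fun θ : ℝ => (1 - lapl μ θ) / θ) (𝓝[>] 0) (𝓝 (∫ x, x ∂μ)) := by
  have hae : ∀ᵐ x ∂μ, 0 ≤ x := by
    rw [ae_iff]
    simpa [Set.Iio] using h0
  have hexp : ∀ θ : ℝ, 0 < θ → Integrable (fun x => Real.exp (-θ * x)) μ := by
    intro θ hθ
    refine Integrable.of_bound (C := 1) (by fun_prop) ?_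
    filter_upwards [hae] with x hx
    rw [Real.norm_eq_abs, abs_of_pos (Real.exp_pos _), Real.exp_le_one_iff]
    nlinarith
  have key : Tendsto (fun θ : ℝ => ∫ x, (1 - Real.exp (-θ * x)) / θ ∂μ) (𝓝[>] 0)
      (𝓝 (∫ x, x ∂μ)) := by
    refine tendsto_integral_filter_of_dominated_convergence (fun x => x) ?_ ?_ hi ?_
    · exact Eventually.of_forall fun θ => by fun_prop
    · filter_upwards [self_mem_nhdsWithin] with θ hθ
      have hθ : 0 < θ := hθ
      filter_upwards [hae] with x hx
      have h1 : Real.exp (-θ * x) ≤ 1 := by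
        rw [Real.exp_le_one_iff]; nlinarith
      have h2 := Real.add_one_le_exp (-θ * x)
      rw [Real.norm_eq_abs, abs_of_nonneg (div_nonneg (by linarith) hθ.le), div_le_iff₀ hθ]
      nlinarith
    · refine Eventually.of_forall fun x => ?_
      have hd : HasDerivAt (fun θ : ℝ => 1 - Real.exp (-θ * x)) x 0 := by
        have h := (((hasDerivAt_id (0:ℝ)).neg.mul_const x).exp).const_sub 1
        simpa using h
      have h := hd.tendsto_slope_zero_right
      refine h.congr fun θ => ?_
      simp [div_eq_inv_mul]
  refine key.congr' ?_
  filter_upwards [self_mem_nhdsWithin] with θ hθ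
  rw [integral_div, integral_sub (integrable_const _) (hexp θ hθ)]
  simp [lapl]

/-- asymptotics of one `h`, `δ` pair -/
theorem pair_asymp (lam beta : ℝ) (hlam : 0 < lam) (hbeta : 0 ≤ beta)
    (S R : Measure ℝ) [IsProbabilityMeasure S] [IsProbabilityMeasure R]
    (hS : S (Set.Iio 0) = 0) (hR : R (Set.Iio 0) = 0)
    (hiS : Integrable (fun x => x) S) (hiR : Integrable (fun x => x) R)
    (h δ : ℝ → ℝ)
    (hh : ∀ z, h z = lam + beta - lam * z - beta * lapl R (lam - lam * z))
    (hδ : ∀ z, δ z = lapl S (h z)) :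
    Filter.Tendsto (fun z => (1 - lapl R (lam - lam * z)) / (lam - lam * z))
      (nhdsWithin 1 (Set.Iio 1)) (nhds (∫ x, x ∂ R)) ∧
    Filter.Tendsto (fun z => (1 - δ z) / h z)
      (nhdsWithin 1 (Set.Iio 1)) (nhds (∫ x, x ∂S)) ∧
    Filter.Tendsto (fun z => (1 - δ z) / (1 - z))
      (nhdsWithin 1 (Set.Iio 1)) (nhds ((∫ x, x ∂S) * (lam * (1 + beta * ∫ x, x ∂ R)))) ∧
    0 ≤ (∫ x, x ∂S) ∧ 0 ≤ (∫ x, x ∂ R) := by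
  have hS0 : 0 ≤ ∫ x, x ∂S := by
    refine integral_nonneg_of_ae ?_
    show ∀ᵐ x ∂S, 0 ≤ x
    rw [ae_iff]; simpa [Set.Iio] using hS
  have hR0 : 0 ≤ ∫ x, x ∂ R := by
    refine integral_nonneg_of_ae ?_
    show ∀ᵐ x ∂ R, 0 ≤ x
    rw [ae_iff]; simpa [Set.Iio] using hR
  have hid : Filter.Tendsto (fun z : ℝ => 1 - z) (nhdsWithin 1 (Set.Iio 1)) (nhds 0) := by
    have : Filter.Tendsto (fun z : ℝ => 1 - z) (nhds 1) (nhds (1 - 1)) :=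
      (continuous_const.sub continuous_id).tendsto 1
    rw [sub_self] at this
    exact this.mono_left nhdsWithin_le_nhds
  have hθ : Filter.Tendsto (fun z : ℝ => lam - lam * z) (nhdsWithin 1 (Set.Iio 1))
      (nhdsWithin 0 (Set.Ioi 0)) := by
    refine tendsto_nhdsWithin_iff.2 ⟨?_, ?_⟩
    · have := hid.const_mul lam
      rw [mul_zero] at this
      exact this.congr fun z => by ring
    · filter_upwards [self_mem_nhdsWithin] with z hz
      have hz : z < 1 := hz
      show 0 < lam - lam * z
      nlinarith
  have hRl := (lapl_slope R hR hiR).comp hθ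
  have hhx : Filter.Tendsto (fun z => h z / (1 - z)) (nhdsWithin 1 (Set.Iio 1))
      (nhds (lam * (1 + beta * ∫ x, x ∂ R))) := by
    refine (((hRl.const_mul beta).const_add 1).const_mul lam).congr' ?_
    filter_upwards [self_mem_nhdsWithin] with z hz
    have hz : z < 1 := hz
    have h1 : 1 - z ≠ 0 := by linarith
    have h2 : lam - lam * z = lam * (1 - z) := by ring
    simp only [Function.comp, hh]
    rw [h2]
    field_simp
    ring
  have hk : 0 < lam * (1 + beta * ∫ x, x ∂ R) := by positivity
  have hhpos : ∀ᶠ z in nhdsWithin 1 (Set.Iio 1), 0 < h z := by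
    filter_upwards [self_mem_nhdsWithin, hhx.eventually (lt_mem_nhds hk)] with z hz hp
    have hz : z < 1 := hz
    have h1 : 0 < 1 - z := by linarith
    exact (div_pos_iff_of_pos_right h1).1 hp
  have hh0 : Filter.Tendsto h (nhdsWithin 1 (Set.Iio 1)) (nhdsWithin 0 (Set.Ioi 0)) := by
    refine tendsto_nhdsWithin_iff.2 ⟨?_, hhpos⟩
    have := hhx.mul hid
    rw [mul_zero] at this
    refine this.congr' ?_
    filter_upwards [self_mem_nhdsWithin] with z hz
    have hz : z < 1 := hz
    have h1 : 1 - z ≠ 0 := by linarith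
    field_simp
  have hSl : Filter.Tendsto (fun z => (1 - δ z) / h z)
      (nhdsWithin 1 (Set.Iio 1)) (nhds (∫ x, x ∂S)) := by
    refine ((lapl_slope S hS hiS).comp hh0).congr fun z => ?_
    simp [hδ]
  refine ⟨hRl, hSl, ?_, hS0, hR0⟩
  refine (hSl.mul hhx).congr' ?_
  filter_upwards [self_mem_nhdsWithin, hhpos] with z hz hp
  have hz : z < 1 := hz
  have h1 : 1 - z ≠ 0 := by linarith
  have h2 := hp.ne'
  field_simp

/-- the orbit-size generating function
`P(z) = P₀(z) + P̃₁(z) + P̃₂(z) + P̃₃(z) + P̃₄(z)` satisfies `lim_{z→1⁻} P(z) = 1`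
(normalization of the stationary distribution). -/
theorem normalization
    (lam alpha nu beta1 beta2 : ℝ)
    (hlam : 0 < lam) (halpha : 0 < alpha) (hnu : 0 < nu)
    (hbeta1 : 0 ≤ beta1) (hbeta2 : 0 ≤ beta2)
    (S1 R1 S2 R2 : Measure ℝ)
    [IsProbabilityMeasure S1] [IsProbabilityMeasure R1]
    [IsProbabilityMeasure S2] [IsProbabilityMeasure R2]
    (hS1 : S1 (Set.Iio 0) = 0) (hR1 : R1 (Set.Iio 0) = 0)
    (hS2 : S2 (Set.Iio 0) = 0) (hR2 : R2 (Set.Iio 0) = 0)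
    (hiS1 : Integrable (fun x => x) S1) (hiR1 : Integrable (fun x => x) R1)
    (hiS2 : Integrable (fun x => x) S2) (hiR2 : Integrable (fun x => x) R2)
    (mu11 gamma11 mu21 gamma21 : ℝ)
    (hmu11 : mu11 = ∫ x, x ∂S1) (hgamma11 : gamma11 = ∫ x, x ∂ R1)
    (hmu21 : mu21 = ∫ x, x ∂S2) (hgamma21 : gamma21 = ∫ x, x ∂ R2)
    (rho sigma : ℝ) (hrho : rho = lam * mu11) (hsigma : sigma = alpha * mu21)
    (h1 h2 δ1 δ2 g φ : ℝ → ℝ)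
    (hh1 : ∀ z, h1 z = lam + beta1 - lam * z - beta1 * lapl R1 (lam - lam * z))
    (hh2 : ∀ z, h2 z = lam + beta2 - lam * z - beta2 * lapl R2 (lam - lam * z))
    (hδ1 : ∀ z, δ1 z = lapl S1 (h1 z)) (hδ2 : ∀ z, δ2 z = lapl S2 (h2 z))
    (hg : ∀ u, g u = (lam * (1 - δ1 u) + alpha * (1 - δ2 u)) / (nu * (δ1 u - u)))
    (hφ : ∀ z, φ z = Real.exp (-(∫ u in z..1, g u)))
    (P0 : ℝ → ℝ)
    (hP0 : ∀ z, P0 z = ((1 - rho * (1 + beta1 * gamma11)) /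
      (1 + sigma * (1 + beta2 * gamma21))) * φ z)
    (P1 P2 : ℝ → ℝ)
    (hP1 : ∀ z, P1 z = (lam * (1 - z) + alpha * (1 - δ2 z)) * (1 - δ1 z) /
      ((δ1 z - z) * h1 z) * P0 z)
    (hP2 : ∀ z, P2 z = alpha * (1 - δ2 z) / h2 z * P0 z)
    (P3 P4 : ℝ → ℝ)
    (hP3 : ∀ z, P3 z = beta1 * (1 - lapl R1 (lam - lam * z)) / (lam - lam * z) * P1 z)
    (hP4 : ∀ z, P4 z = beta2 * (1 - lapl R2 (lam - lam * z)) / (lam - lam * z) * P2 z)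
    (hstab : rho * (1 + beta1 * gamma11) < 1) :
    Filter.Tendsto (fun z : ℝ => P0 z + P1 z + P2 z + P3 z + P4 z)
      (nhdsWithin 1 (Set.Iio 1)) (nhds 1) := by
  obtain ⟨r1, s1, d1, m1, c1⟩ := pair_asymp lam beta1 hlam hbeta1 S1 R1 hS1 hR1 hiS1 hiR1 h1 δ1 hh1 hδ1
  obtain ⟨r2, s2, d2, m2, c2⟩ := pair_asymp lam beta2 hlam hbeta2 S2 R2 hS2 hR2 hiS2 hiR2 h2 δ2 hh2 hδ2
  rw [← hgamma11] at r1 d1 c1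
  rw [← hmu11] at s1 d1 m1
  rw [← hgamma21] at r2 d2 c2
  rw [← hmu21] at s2 d2 m2
  have hr : mu11 * (lam * (1 + beta1 * gamma11)) < 1 := by
    rw [hrho] at hstab; linarith
  have hr' : 1 - mu11 * (lam * (1 + beta1 * gamma11)) ≠ 0 := by linarith
  have hD : 0 < 1 + sigma * (1 + beta2 * gamma21) := by rw [hsigma]; positivity
  have e1 : Filter.Tendsto (fun z => (δ1 z - z) / (1 - z)) (nhdsWithin 1 (Set.Iio 1))
      (nhds (1 - mu11 * (lam * (1 + beta1 * gamma11)))) := by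
    refine (d1.const_sub 1).congr' ?_
    filter_upwards [self_mem_nhdsWithin] with z hz
    have hz : z < 1 := hz
    have h1 : 1 - z ≠ 0 := by linarith
    field_simp
    ring
  have hgl := ((d1.const_mul lam).add (d2.const_mul alpha)).div (e1.const_mul nu)
    (mul_ne_zero hnu.ne' hr')
  have hgl' := hgl.congr' (f₂ := g) (by
    filter_upwards [self_mem_nhdsWithin] with z hz
    have hz : z < 1 := hz
    have h1 : 1 - z ≠ 0 := by linarith
    simp only [Pi.add_apply, Pi.div_apply]
    rw [hg, ← mul_div_assoc, ← mul_div_assoc, ← mul_div_assoc, ← add_div,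
      div_div_div_cancel_right₀ h1])
  have hint : Filter.Tendsto (fun z => ∫ u in z..1, g u) (nhdsWithin 1 (Set.Iio 1)) (nhds 0) := by
    obtain ⟨C, hC⟩ : ∃ C, ∀ᶠ z in nhdsWithin 1 (Set.Iio 1), ‖g z‖ < C :=
      ⟨_, hgl'.norm.eventually (gt_mem_nhds (lt_add_one _))⟩
    obtain ⟨a, ha, hC⟩ := (mem_nhdsLT_iff_exists_Ioo_subset).1 hC
    have ha : a < 1 := ha
    have hlim : Filter.Tendsto (fun z : ℝ => C * |1 - z|) (nhdsWithin 1 (Set.Iio 1)) (nhds 0) := by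
      have : Filter.Tendsto (fun z : ℝ => C * |1 - z|) (nhds 1) (nhds (C * |1 - 1|)) :=
        Continuous.tendsto (by fun_prop) 1
      simp only [sub_self, abs_zero, mul_zero] at this
      exact this.mono_left nhdsWithin_le_nhds
    refine squeeze_zero_norm' ?_ hlim
    filter_upwards [Ioo_mem_nhdsLT ha] with z hz
    refine intervalIntegral.norm_integral_le_of_norm_le_const_ae ?_
    have h1 : ∀ᵐ x : ℝ, x ≠ 1 := by simp [ae_iff]
    filter_upwards [h1] with x hx1 hx
    rw [Set.uIoc_of_le hz.2.le] at hx
    have hx' : x ∈ Set.Ioo a 1 := ⟨hz.1.trans hx.1, lt_of_le_of_ne hx.2 hx1⟩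
    exact le_of_lt (hC hx')
  have hφl : Filter.Tendsto φ (nhdsWithin 1 (Set.Iio 1)) (nhds 1) := by
    have := (Real.continuous_exp.tendsto _).comp hint.neg
    rw [neg_zero, Real.exp_zero] at this
    exact this.congr fun z => (hφ z).symm
  have p0 : Filter.Tendsto P0 (nhdsWithin 1 (Set.Iio 1)) (nhds ((1 - rho * (1 + beta1 * gamma11)) /
      (1 + sigma * (1 + beta2 * gamma21)))) := by
    have := hφl.const_mul ((1 - rho * (1 + beta1 * gamma11)) /
      (1 + sigma * (1 + beta2 * gamma21)))
    rw [mul_one] at this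
    exact this.congr fun z => (hP0 z).symm
  have p1 := (((((d2.const_mul alpha).const_add lam).mul s1).div e1 hr').mul p0).congr' (f₂ := P1) (by
    filter_upwards [self_mem_nhdsWithin] with z hz
    have hz : z < 1 := hz
    have h1 : 1 - z ≠ 0 := by linarith
    simp only [Pi.mul_apply, Pi.div_apply]
    rw [hP1]
    congr 1
    have : lam * (1 - z) + alpha * (1 - δ2 z) =
      (lam + alpha * ((1 - δ2 z) / (1 - z))) * (1 - z) := by field_simp
    rw [this]
    simp only [div_eq_mul_inv, mul_inv, inv_inv]
    ring)
  have p2 := ((s2.const_mul alpha).mul p0).congr (f₂ := P2) (by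
    intro z; rw [hP2, mul_div_assoc])
  have p3 := ((r1.const_mul beta1).mul p1).congr (f₂ := P3) (by
    intro z; rw [hP3, mul_div_assoc])
  have p4 := ((r2.const_mul beta2).mul p2).congr (f₂ := P4) (by
    intro z; rw [hP4, mul_div_assoc])
  have hsum := (((p0.add p1).add p2).add p3).add p4
  convert hsum using 2
  rw [hsigma] at hD ⊢
  rw [hrho]
  have hD' := hD.ne'
  have e : 1 - lam * mu11 * (1 + beta1 * gamma11) =
    1 - mu11 * (lam * (1 + beta1 * gamma11)) := by ring
  rw [e]
  generalize hq : 1 - mu11 * (lam * (1 + beta1 * gamma11)) = q at *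
  have hq2 : q + mu11 * (lam * (1 + beta1 * gamma11)) = 1 := by rw [← hq]; ring
  generalize hE : 1 + alpha * mu21 * (1 + beta2 * gamma21) = E at *
  have hA : lam + alpha * (mu21 * (lam * (1 + beta2 * gamma21))) = lam * E := by rw [← hE]; ring
  rw [hA]
  have hB : lam * E * mu11 / q * (q / E) = lam * mu11 := by field_simp
  rw [hB]
  have : q / E * E = q := by field_simp
  linear_combination (-1) * hq2 - this - q / E * hE
end
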